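/- Let m ≥ 1 be a real number and let p, q be vectors in ℝⁿ with p + q ≠ 0. Then |p+q|^m ≤ |p|^m + m·|p+q|^{m-2}·⟨p+q, q⟩, where ⟨·,·⟩ denotes the Euclidean inner product and |·| the Euclidean norm. -/

import Mathlib

open scoped RealInnerProductSpace

/-- Tangent-line inequality for the convex function `t ↦ |t|^m`, `m ≥ 1`:
for vectors `p, q` in Euclidean space with `p + q ≠ 0`,
`|p+q|^m ≤ |p|^m + m·|p+q|^(m-2)·⟨p+q, q⟩`. -/
theorem rpow_norm_add_le_tangent_line {n : ℕ} (m : ℝ) (hm : 1 ≤ m)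
    (p q : EuclideanSpace ℝ (Fin n)) (hpq : p + q ≠ 0) :
    ‖p + q‖ ^ m ≤ ‖p‖ ^ m + m * ‖p + q‖ ^ (m - 2) * ⟪p + q, q⟫ := by
  have ha : 0 < ‖p + q‖ := norm_pos_iff.mpr hpq
  have hb : 0 ≤ ‖p‖ := norm_nonneg p
  have hin : ‖p + q‖ ^ 2 - ‖p + q‖ * ‖p‖ ≤ ⟪p + q, q⟫ := by
    have h1 : ⟪p + q, p + q⟫ = ‖p + q‖ ^ 2 := real_inner_self_eq_norm_sq _
    have h2 := real_inner_le_norm (p + q) p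
    rw [inner_add_right] at h1
    linarith
  generalize ⟪p + q, q⟫ = t at *
  generalize ‖p + q‖ = a at *
  generalize ‖p‖ = b at *
  have hB := one_add_mul_self_le_rpow_one_add (s := b / a - 1)
    (by have := div_nonneg hb ha.le; linarith) hm
  rw [add_sub_cancel, Real.div_rpow hb ha.le, le_div_iff₀ (Real.rpow_pos_of_pos ha m)] at hB
  have hc : 0 < a ^ (m - 2) := Real.rpow_pos_of_pos ha _
  have hd : a ^ m = a ^ (m - 2) * a ^ 2 := by
    rw [← Real.rpow_natCast a 2, ← Real.rpow_add ha]
    norm_num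
  have he : m * a ^ (m - 2) * (a ^ 2 - a * b) ≤ m * a ^ (m - 2) * t :=
    mul_le_mul_of_nonneg_left hin (by positivity)
  have hf : (1 + m * (b / a - 1)) * a ^ m = a ^ m - m * a ^ (m - 2) * (a ^ 2 - a * b) := by
    rw [hd]
    field_simp
    ring
  linarith
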